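/- arXiv:math/0601601 — 5 statements merged into one kernel-verified Lean document; each statement's English description precedes it below -/
import Mathlib

section
/- Let A be a unital associative algebra over ℂ (possibly noncommutative), let m, n be positive integers, and let U be an m × m matrix and V an n × n matrix with entries in A. Suppose there exist finitely many triples (d_s, W_s, T_s) for s = 1,…,r, where d_s is a positive integer, W_s is a d_s × d_s matrix over A, and T_s is a complex (m·n) × d_s matrix whose rows are indexed by pairs (i,k) ∈ {1,…,m} × {1,…,n}, such that: (a) Σ_{s=1}^r T_s T_s* = 1_{mn}; (b) X T_s = T_s W_s for every s, where X is the (m·n) × (m·n) matrix over A with entries X_{(i,k),(j,l)} = U_{ij}·V_{kl}; and (c) Y (F T_s) = (F T_s) W_s for every s, where Y is the (n·m) × (n·m) matrix over A with entries Y_{(k,i),(l,j)} = V_{kl}·U_{ij}, and F T_s is the (n·m) × d_s matrix with (F T_s)_{(k,i),t} = (T_s)_{(i,k),t}. Then U_{ij}·V_{kl} = V_{kl}·U_{ij} in A for all i, j, k, l. -/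
open scoped Matrix

open scoped Kronecker

section

variable {A ι κ : Type*}

theorem matrix_submatrix_mul_eq_of_mul_submatrix_eq {δ : Type*} [NonUnitalNonAssocSemiring A]
    [Fintype ι] [Fintype κ] [Fintype δ] (e : ι ≃ κ)
    {X : Matrix ι ι A} {T : Matrix κ δ A} {W : Matrix δ δ A}
    (h : X * T.submatrix e id = T.submatrix e id * W) :
    X.submatrix e.symm e.symm * T = T * W :=
  calc
    X.submatrix e.symm e.symm * T = (X * T.submatrix e id).submatrix e.symm id := by
      rw [← Matrix.submatrix_mul_equiv X _ e.symm e.symm id]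
      simp
    _ = (T.submatrix e id * W).submatrix e.symm id := by rw [h]
    _ = T * W := by
      rw [Matrix.submatrix_mul _ _ _ id _ Function.bijective_id]
      simp

variable [Semiring A]

theorem matrix_eq_of_forall_mul_eq_of_sum_mul_eq_one {σ : Type*} {δ : σ → Type*}
    [Fintype σ] [∀ s, Fintype (δ s)] [Fintype κ] [DecidableEq κ]
    {X Y : Matrix ι κ A} {T : ∀ s, Matrix κ (δ s) A} {S : ∀ s, Matrix (δ s) κ A}
    (hTS : ∑ s, T s * S s = 1) (hXY : ∀ s, X * T s = Y * T s) : X = Y :=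
  calc
    X = ∑ s, X * T s * S s := by
      simp only [Matrix.mul_assoc, ← Matrix.mul_sum, hTS, Matrix.mul_one]
    _ = ∑ s, Y * T s * S s := by simp only [hXY]
    _ = Y := by simp only [Matrix.mul_assoc, ← Matrix.mul_sum, hTS, Matrix.mul_one]

theorem entries_commute_of_rep_general {σ : Type*} {δ : σ → Type*}
    [Fintype ι] [DecidableEq ι] [Fintype κ] [DecidableEq κ]
    [Fintype σ] [∀ s, Fintype (δ s)]
    {U : Matrix ι ι A} {V : Matrix κ κ A} {W : ∀ s, Matrix (δ s) (δ s) A}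
    {T : ∀ s, Matrix (ι × κ) (δ s) A} {S : ∀ s, Matrix (δ s) (ι × κ) A}
    (hTS : ∑ s, T s * S s = 1)
    (hUV : ∀ s, (U ⊗ₖ V) * T s = T s * W s)
    (hVU : ∀ s, (V ⊗ₖ U) * (T s).submatrix Prod.swap id = (T s).submatrix Prod.swap id * W s)
    (i j : ι) (k l : κ) : Commute (U i j) (V k l) := by
  have hflip (s : σ) : (V ⊗ₖ U).submatrix Prod.swap Prod.swap * T s = T s * W s :=
    matrix_submatrix_mul_eq_of_mul_submatrix_eq (Equiv.prodComm κ ι) (hVU s)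
  have hUV_flip : U ⊗ₖ V = (V ⊗ₖ U).submatrix Prod.swap Prod.swap :=
    matrix_eq_of_forall_mul_eq_of_sum_mul_eq_one hTS fun s => (hUV s).trans (hflip s).symm
  exact congrFun₂ hUV_flip (i, k) (j, l)

end

/-- If `{U_π}` behaves like a unitary representation of the dual of a finite group,
its entries pairwise commute. Here the representation relations for `π⊗ρ` and `ρ⊗π`
are encoded by explicit matrix hypotheses. -/
theorem entries_commute_of_rep
    {A : Type*} [Ring A] [Algebra ℂ A]
    (m n : ℕ) (hm : 0 < m) (hn : 0 < n)
    (U : Matrix (Fin m) (Fin m) A) (V : Matrix (Fin n) (Fin n) A)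
    (r : ℕ) (d : Fin r → ℕ) (hd : ∀ s, 0 < d s)
    (W : (s : Fin r) → Matrix (Fin (d s)) (Fin (d s)) A)
    (T : (s : Fin r) → Matrix (Fin m × Fin n) (Fin (d s)) ℂ)
    (ha : ∑ s, ((T s).map (algebraMap ℂ A)) * (((T s)ᴴ).map (algebraMap ℂ A)) = 1)
    (hb : ∀ s,
      (Matrix.of fun p q : Fin m × Fin n => U p.1 q.1 * V p.2 q.2) *
          ((T s).map (algebraMap ℂ A)) =
        ((T s).map (algebraMap ℂ A)) * (W s))
    (hc : ∀ s,
      (Matrix.of fun p q : Fin n × Fin m => V p.1 q.1 * U p.2 q.2) *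
          ((Matrix.of fun (p : Fin n × Fin m) (t : Fin (d s)) => T s (p.2, p.1) t).map
            (algebraMap ℂ A)) =
        ((Matrix.of fun (p : Fin n × Fin m) (t : Fin (d s)) => T s (p.2, p.1) t).map
            (algebraMap ℂ A)) * (W s)) :
    ∀ (i j : Fin m) (k l : Fin n), U i j * V k l = V k l * U i j :=
  entries_commute_of_rep_general ha hb hc
end

section
/- Let N and n be positive integers and let {e_{ij}}_{1 ≤ i,j ≤ n} be a system of matrix units in M_N(ℂ), i.e., e_{ij}·e_{kl} = δ_{jk}·e_{il}, (e_{ij})* = e_{ji}, and Σ_{i=1}^n e_{ii} = 1. Let x ∈ M_N(ℂ) and ε > 0 be such that ‖x·e_{ij} − e_{ij}·x‖₂ < ε/n for all i, j. Then ‖(1/n)·Σ_{i,j=1}^n e_{ij}·x·e_{ji} − x‖₂ < ε. -/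
open scoped Matrix

/-- The normalized 2-norm `‖a‖₂ = sqrt(τ(a*a))` on `M_N(ℂ)`, where `τ = tr/N`. -/
noncomputable def l2Norm {N : ℕ} (a : Matrix (Fin N) (Fin N) ℂ) : ℝ :=
  Real.sqrt ((Matrix.trace (aᴴ * a)).re / N)

/-!
By the matrix unit relations, `∑ i j, x e_ij e_ji = n x`, so `x` differs from its expectation by
the average `(1/n) ∑ i j, [x, e_ij] e_ji`. Right multiplication by the partial isometry `e_ji` is
contractive for the 2-norm of a positive trace, so the triangle inequality bounds the difference by
`(1/n) ∑ i j, ‖[x, e_ij]‖₂`.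
-/

section MatrixUnits

variable {ι A : Type*} [Fintype ι] [DecidableEq ι] [Ring A] [StarRing A] {e : ι → ι → A}

/-- A full system of matrix units in a star ring, indexed by a finite type. -/
structure IsMatrixUnits (e : ι → ι → A) : Prop where
  mul_eq : ∀ i j k l, e i j * e k l = if j = k then e i l else 0
  star_eq : ∀ i j, star (e i j) = e j i
  sum_diag : ∑ i, e i i = 1

namespace IsMatrixUnits

lemma mul_swap (he : IsMatrixUnits e) (i j : ι) : e i j * e j i = e i i := by
  rw [he.mul_eq, if_pos rfl]

lemma mul_star_self (he : IsMatrixUnits e) (i j : ι) : e i j * star (e i j) = e i i := by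
  rw [he.star_eq, he.mul_swap]

lemma isStarProjection_diag (he : IsMatrixUnits e) (i : ι) : IsStarProjection (e i i) :=
  ⟨he.mul_swap i i, he.star_eq i i⟩

lemma sum_sum_mul_mul_swap (he : IsMatrixUnits e) (x : A) :
    ∑ i, ∑ j, x * e i j * e j i = Fintype.card ι • x := by
  simp only [mul_assoc, he.mul_swap, Finset.sum_const, Finset.card_univ, ← Finset.smul_sum,
    ← Finset.mul_sum, he.sum_diag, mul_one]

end IsMatrixUnits

/-- The average `(1/n) ∑ i j, e_ij x e_ji` over a family `e` indexed by a type with `n` elements;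
for matrix units, the conditional expectation onto their relative commutant. -/
def relativeCommutantExpectation (𝕜 : Type*) {ι A : Type*} [Fintype ι] [DivisionRing 𝕜] [Ring A]
    [Module 𝕜 A] (e : ι → ι → A) (x : A) : A :=
  (1 / (Fintype.card ι : 𝕜)) • ∑ i, ∑ j, e i j * x * e j i

lemma IsMatrixUnits.sub_relativeCommutantExpectation {𝕜 : Type*} [DivisionRing 𝕜] [Module 𝕜 A]
    (he : IsMatrixUnits e) (hcard : (Fintype.card ι : 𝕜) ≠ 0) (x : A) :
    x - relativeCommutantExpectation 𝕜 e x =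
      (1 / (Fintype.card ι : 𝕜)) • ∑ i, ∑ j, (x * e i j - e i j * x) * e j i := by
  simp only [relativeCommutantExpectation, sub_mul, Finset.sum_sub_distrib,
    he.sum_sum_mul_mul_swap, smul_sub, ← Nat.cast_smul_eq_nsmul 𝕜, smul_smul,
    one_div_mul_cancel hcard, one_smul]

end MatrixUnits

section PositiveFunctional

variable {𝕜 A : Type*} [RCLike 𝕜] [Ring A] [StarRing A] [Algebra 𝕜 A] {τ : A →ₗ[𝕜] 𝕜}

/-- A positive linear functional on a star algebra over `ℝ` or `ℂ`. Hermitian symmetry is a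
separate field because over `ℝ` it does not follow from positivity. -/
structure IsPositiveFunctional (τ : A →ₗ[𝕜] 𝕜) : Prop where
  map_star : ∀ a, τ (star a) = star (τ a)
  re_map_star_mul_self_nonneg : ∀ a, 0 ≤ RCLike.re (τ (star a * a))

/-- A positive tracial functional on a star algebra, not required to be faithful or normalized. -/
structure IsPositiveTrace (τ : A →ₗ[𝕜] 𝕜) : Prop extends IsPositiveFunctional τ where
  map_mul_comm : ∀ a b, τ (a * b) = τ (b * a)

namespace IsPositiveFunctional

variable [StarModule 𝕜 A]

/-- The semi-inner product `⟪a, b⟫ = τ (a* b)` of the GNS construction. -/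
abbrev gnsCore (hτ : IsPositiveFunctional τ) : PreInnerProductSpace.Core 𝕜 A where
  inner a b := τ (star a * b)
  conj_inner_symm a b := by
    rw [starRingEnd_apply, ← hτ.map_star, star_mul, star_star]
  re_inner_nonneg := hτ.re_map_star_mul_self_nonneg
  add_left a b c := by rw [star_add, add_mul, map_add]
  smul_left a b r := by
    rw [star_smul, smul_mul_assoc, map_smul, smul_eq_mul, starRingEnd_apply]

/-- The 2-seminorm `‖a‖₂ = √τ(a* a)` attached to a positive functional `τ`. -/
noncomputable def twoSeminorm (hτ : IsPositiveFunctional τ) : Seminorm 𝕜 A :=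
  letI : PreInnerProductSpace.Core 𝕜 A := hτ.gnsCore
  letI : SeminormedAddCommGroup A := InnerProductSpace.Core.toSeminormedAddCommGroup (𝕜 := 𝕜)
  letI : NormedSpace 𝕜 A := InnerProductSpace.Core.toNormedSpace
  normSeminorm 𝕜 A

lemma twoSeminorm_apply (hτ : IsPositiveFunctional τ) (a : A) :
    hτ.twoSeminorm a = √(RCLike.re (τ (star a * a))) := rfl

end IsPositiveFunctional

namespace IsPositiveTrace

protected lemma smul (hτ : IsPositiveTrace τ) {r : ℝ} (hr : 0 ≤ r) :
    IsPositiveTrace (r • τ) where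
  map_star a := by simp [hτ.map_star]
  re_map_star_mul_self_nonneg a := by
    simpa [RCLike.smul_re] using mul_nonneg hr (hτ.re_map_star_mul_self_nonneg a)
  map_mul_comm a b := by simp [hτ.map_mul_comm a b]

lemma map_star_mul_self_mul (hτ : IsPositiveTrace τ) (a v : A) :
    τ (star (a * v) * (a * v)) = τ (star a * a * (v * star v)) := by
  rw [star_mul, mul_assoc, hτ.map_mul_comm]
  simp only [mul_assoc]

lemma re_map_star_mul_self_mul_nonneg (hτ : IsPositiveTrace τ) (a : A) {p : A}
    (hp : IsStarProjection p) : 0 ≤ RCLike.re (τ (star a * a * p)) := by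
  have hpp : p * star p = p := by rw [hp.isSelfAdjoint.star_eq, hp.isIdempotentElem.eq]
  simpa only [hτ.map_star_mul_self_mul, hpp] using hτ.re_map_star_mul_self_nonneg (a * p)

variable [StarModule 𝕜 A]

lemma twoSeminorm_mul_le (hτ : IsPositiveTrace τ) (a : A) {v : A}
    (hv : IsStarProjection (v * star v)) : hτ.twoSeminorm (a * v) ≤ hτ.twoSeminorm a := by
  have hcompl := hτ.re_map_star_mul_self_mul_nonneg a hv.one_sub
  rw [mul_sub, mul_one, map_sub, map_sub, sub_nonneg] at hcompl
  simpa only [hτ.twoSeminorm_apply, hτ.map_star_mul_self_mul] using Real.sqrt_le_sqrt hcompl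

variable {ι : Type*} [Fintype ι] [DecidableEq ι] [Nonempty ι] {e : ι → ι → A}

lemma twoSeminorm_relativeCommutantExpectation_sub_le (hτ : IsPositiveTrace τ)
    (he : IsMatrixUnits e) (x : A) :
    hτ.twoSeminorm (relativeCommutantExpectation 𝕜 e x - x) ≤
      1 / Fintype.card ι * ∑ i, ∑ j, hτ.twoSeminorm (x * e i j - e i j * x) := by
  have twoSeminorm_sum_le (f : ι → A) : hτ.twoSeminorm (∑ i, f i) ≤ ∑ i, hτ.twoSeminorm (f i) :=
    Finset.le_sum_of_subadditive _ (map_zero _).le (map_add_le_add _) _ _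
  have hterm (i j : ι) : hτ.twoSeminorm ((x * e i j - e i j * x) * e j i) ≤
      hτ.twoSeminorm (x * e i j - e i j * x) :=
    hτ.twoSeminorm_mul_le _ (by simpa only [he.mul_star_self] using he.isStarProjection_diag j)
  have hcard : (Fintype.card ι : 𝕜) ≠ 0 := Nat.cast_ne_zero.2 Fintype.card_ne_zero
  calc hτ.twoSeminorm (relativeCommutantExpectation 𝕜 e x - x)
      = 1 / Fintype.card ι *
          hτ.twoSeminorm (∑ i, ∑ j, (x * e i j - e i j * x) * e j i) := by
        rw [map_sub_rev, he.sub_relativeCommutantExpectation hcard, map_smul_eq_mul, norm_div,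
          norm_one, RCLike.norm_natCast]
    _ ≤ 1 / Fintype.card ι * ∑ i, ∑ j, hτ.twoSeminorm (x * e i j - e i j * x) := by
        gcongr
        refine (twoSeminorm_sum_le _).trans (Finset.sum_le_sum fun i _ => ?_)
        exact (twoSeminorm_sum_le _).trans (Finset.sum_le_sum fun j _ => hterm i j)

end IsPositiveTrace

theorem close_to_relative_commutant_expectation_general [StarModule 𝕜 A]
    {ι : Type*} [Fintype ι] [DecidableEq ι] [Nonempty ι] {e : ι → ι → A}
    (hτ : IsPositiveTrace τ) (he : IsMatrixUnits e) (x : A) (ε : ℝ)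
    (hx : ∀ i j, hτ.twoSeminorm (x * e i j - e i j * x) < ε / Fintype.card ι) :
    hτ.twoSeminorm (relativeCommutantExpectation 𝕜 e x - x) < ε :=
  calc hτ.twoSeminorm (relativeCommutantExpectation 𝕜 e x - x)
      ≤ 1 / Fintype.card ι * ∑ i, ∑ j, hτ.twoSeminorm (x * e i j - e i j * x) :=
        hτ.twoSeminorm_relativeCommutantExpectation_sub_le he x
    _ < 1 / Fintype.card ι * ∑ _i : ι, ∑ _j : ι, ε / Fintype.card ι := by
        gcongr with i _ j _
        · exact Finset.univ_nonempty
        · exact Finset.univ_nonempty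
        · exact hx i j
    _ = ε := by
        simp only [Finset.sum_const, Finset.card_univ, nsmul_eq_mul]
        field_simp

end PositiveFunctional

section Matrix

open scoped ComplexOrder in
lemma isPositiveTrace_traceLinearMap (m 𝕜 : Type*) [Fintype m] [DecidableEq m]
    [RCLike 𝕜] : IsPositiveTrace (Matrix.traceLinearMap m 𝕜 𝕜) where
  map_star := Matrix.trace_conjTranspose
  re_map_star_mul_self_nonneg a :=
    (RCLike.nonneg_iff.1 (Matrix.posSemidef_conjTranspose_mul_self a).trace_nonneg).1
  map_mul_comm := Matrix.trace_mul_comm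

lemma isPositiveTrace_normalizedTrace (N : ℕ) :
    IsPositiveTrace ((N : ℝ)⁻¹ • Matrix.traceLinearMap (Fin N) ℂ ℂ) :=
  (isPositiveTrace_traceLinearMap (Fin N) ℂ).smul (by positivity)

lemma l2Norm_eq_twoSeminorm {N : ℕ} (a : Matrix (Fin N) (Fin N) ℂ) :
    l2Norm a = (isPositiveTrace_normalizedTrace N).twoSeminorm a := by
  rw [l2Norm, IsPositiveFunctional.twoSeminorm_apply, div_eq_inv_mul, LinearMap.smul_apply,
    RCLike.smul_re]
  rfl

end Matrix

/-- If `x` almost commutes with a system of matrix units, then `x` is close to its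
conditional expectation onto the relative commutant of the matrix units. -/
theorem close_to_relative_commutant_expectation
    (N n : ℕ) (hN : 0 < N) (hn : 0 < n)
    (e : Fin n → Fin n → Matrix (Fin N) (Fin N) ℂ)
    (hmul : ∀ i j k l, e i j * e k l = if j = k then e i l else 0)
    (hstar : ∀ i j, (e i j)ᴴ = e j i)
    (hsum : ∑ i, e i i = 1)
    (x : Matrix (Fin N) (Fin N) ℂ) (ε : ℝ)
    (hx : ∀ i j, l2Norm (x * e i j - e i j * x) < ε / n) :
    l2Norm ((1 / (n : ℂ)) • ∑ i, ∑ j, e i j * x * e j i - x) < ε := by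
  have : Nonempty (Fin n) := ⟨⟨0, hn⟩⟩
  simp only [l2Norm_eq_twoSeminorm] at hx ⊢
  simpa only [relativeCommutantExpectation, Fintype.card_fin] using
    close_to_relative_commutant_expectation_general (isPositiveTrace_normalizedTrace N)
      ⟨hmul, hstar, hsum⟩ x ε (by simpa only [Fintype.card_fin] using hx)
end

section
/- Let N be a positive integer, f ∈ M_N(ℂ), and 0 < δ ≤ 1/4. If ‖f‖ ≤ 1, ‖f² − f‖₂ < δ, and ‖f* − f‖₂ < δ, then there exists a projection p ∈ M_N(ℂ) (p = p* = p²) such that ‖f − p‖₂ < 6·δ^{1/4}. -/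
open scoped Matrix

/-- The operator norm of a matrix acting on the standard Hermitian space `ℂ^N`. -/
noncomputable def opNorm {N : ℕ} (a : Matrix (Fin N) (Fin N) ℂ) : ℝ :=
  ‖Matrix.toEuclideanCLM (𝕜 := ℂ) a‖

/-!
Write `f = s + k` with `s` self-adjoint and `k` skew-adjoint. Since `f⋆` is close to `f`, `k` is
small, and `s² - s = ½((f² - f) + (f² - f)⋆) - k²` shows that `s` is almost idempotent. Let `χ` be
the indicator of `[1/2, ∞)`. Then `x - χ x = g x * (x² - x)` with `g x = 1 / (x - 1)` for
`x < 1/2` and `g x = 1 / x` for `x ≥ 1/2`, so that `|g| ≤ 2`. Hence `s - χ(s) = g(s) * (s² - s)`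
with `‖g(s)‖ ≤ 2`, and in any `⋆`-invariant seminorm `ν` with `ν (a b) ≤ ‖a‖ ν b` the spectral
projection `χ(s)` is within `2 ν (s² - s)` of `s`. The resulting estimate is linear in `δ`.
-/

theorem exists_isStarProjection_sub_eq_mul {A : Type*} [NormedRing A] [StarRing A]
    [NormedAlgebra ℝ A] [IsometricContinuousFunctionalCalculus ℝ A IsSelfAdjoint]
    {h : A} (hh : IsSelfAdjoint h) (hfin : (spectrum ℝ h).Finite) :
    ∃ p c : A, IsStarProjection p ∧ ‖c‖ ≤ 2 ∧ h - p = c * (h * h - h) := by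
  let χ : ℝ → ℝ := fun x ↦ if x < 1 / 2 then 0 else 1
  let g : ℝ → ℝ := fun x ↦ if x < 1 / 2 then (x - 1)⁻¹ else x⁻¹
  have hχ : ContinuousOn χ (spectrum ℝ h) := hfin.continuousOn χ
  have hg : ContinuousOn g (spectrum ℝ h) := hfin.continuousOn g
  have χ_idem (x : ℝ) : χ x * χ x = χ x := by grind
  have g_mul (x : ℝ) : x - χ x = g x * (x * x - x) := by grind
  have g_bound (x : ℝ) : ‖g x‖ ≤ 2 := by
    rw [← inv_inv 2]
    simp only [g, Real.norm_eq_abs]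
    split_ifs <;> rw [abs_inv] <;> gcongr <;> grind
  have c_bound : ‖cfc g h‖ ≤ 2 := norm_cfc_le zero_le_two fun x _ ↦ g_bound x
  refine ⟨cfc χ h, cfc g h, ⟨?_, cfc_predicate χ h⟩, c_bound, ?_⟩
  · rw [IsIdempotentElem, ← cfc_mul χ χ h, funext χ_idem]
  · calc
      h - cfc χ h = cfc (fun x ↦ x - χ x) h := by rw [cfc_sub (fun x ↦ x) χ h, cfc_id' ℝ h]
      _ = cfc (fun x ↦ g x * (x * x - x)) h := by simp only [g_mul]
      _ = cfc g h * (h * h - h) := by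
        rw [cfc_mul g (fun x ↦ x * x - x) h, cfc_sub (fun x ↦ x * x) (fun x ↦ x) h,
          cfc_mul (fun x ↦ x) (fun x ↦ x) h, cfc_id' ℝ h]

section SelfAdjointPart

theorem selfAdjointPart_mul_self_sub {A : Type*} [Ring A] [StarRing A] [Algebra ℝ A]
    [StarModule ℝ A] (f : A) :
    (selfAdjointPart ℝ f * selfAdjointPart ℝ f - selfAdjointPart ℝ f : A) =
      selfAdjointPart ℝ (f * f - f) - skewAdjointPart ℝ f * skewAdjointPart ℝ f := by
  simp only [selfAdjointPart_apply_coe, skewAdjointPart_apply_coe, invOf_eq_inv, star_sub, star_mul,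
    smul_mul_smul_comm, add_mul, mul_add, sub_mul, mul_sub]
  module

theorem norm_skewAdjointPart_le {A : Type*} [SeminormedAddCommGroup A] [StarAddMonoid A]
    [NormedSpace ℝ A] [StarModule ℝ A] [NormedStarGroup A] (a : A) :
    ‖(skewAdjointPart ℝ a : A)‖ ≤ ‖a‖ := by
  calc
    ‖(skewAdjointPart ℝ a : A)‖ = 2⁻¹ * ‖a - star a‖ := by
      rw [skewAdjointPart_apply_coe, invOf_eq_inv, norm_smul, norm_inv, Real.norm_ofNat]
    _ ≤ 2⁻¹ * (‖a‖ + ‖star a‖) := by gcongr; exact norm_sub_le a (star a)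
    _ = ‖a‖ := by rw [norm_star]; ring

variable {A : Type*} [AddCommGroup A] [StarAddMonoid A] [Module ℝ A] [StarModule ℝ A]
  (ν : Seminorm ℝ A)

theorem seminorm_selfAdjointPart_le (hν : ∀ a, ν (star a) = ν a) (a : A) :
    ν (selfAdjointPart ℝ a) ≤ ν a := by
  calc
    ν (selfAdjointPart ℝ a) = 2⁻¹ * ν (a + star a) := by
      rw [selfAdjointPart_apply_coe, invOf_eq_inv, map_smul_eq_mul, norm_inv, Real.norm_ofNat]
    _ ≤ 2⁻¹ * (ν a + ν (star a)) := by gcongr; exact map_add_le_add ν a (star a)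
    _ = ν a := by rw [hν]; ring

theorem seminorm_skewAdjointPart (a : A) :
    ν (skewAdjointPart ℝ a) = ν (star a - a) / 2 := by
  rw [skewAdjointPart_apply_coe, invOf_eq_inv, map_smul_eq_mul, map_sub_rev, norm_inv,
    Real.norm_ofNat, inv_mul_eq_div]

end SelfAdjointPart

section AlmostProjection

variable {A : Type*} [NormedRing A] [StarRing A] [NormedAlgebra ℝ A] [StarModule ℝ A]
  (ν : Seminorm ℝ A)

theorem seminorm_selfAdjointPart_mul_self_sub_le [NormedStarGroup A]
    (hν_mul : ∀ a b, ν (a * b) ≤ ‖a‖ * ν b) (hν_star : ∀ a, ν (star a) = ν a) (f : A) :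
    ν (selfAdjointPart ℝ f * selfAdjointPart ℝ f - selfAdjointPart ℝ f) ≤
      ν (f * f - f) + ‖f‖ * (ν (star f - f) / 2) := by
  set k : A := ↑(skewAdjointPart ℝ f)
  calc
    _ = ν (selfAdjointPart ℝ (f * f - f) - k * k) := by rw [selfAdjointPart_mul_self_sub]
    _ ≤ ν (selfAdjointPart ℝ (f * f - f)) + ν (k * k) := map_sub_le_add ν _ _
    _ ≤ ν (f * f - f) + ‖k‖ * ν k :=
      add_le_add (seminorm_selfAdjointPart_le ν hν_star _) (hν_mul k k)
    _ ≤ ν (f * f - f) + ‖f‖ * (ν (star f - f) / 2) := by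
      rw [seminorm_skewAdjointPart]
      gcongr
      exact norm_skewAdjointPart_le f

theorem near_projection_general [NormedStarGroup A]
    [IsometricContinuousFunctionalCalculus ℝ A IsSelfAdjoint]
    (hν_mul : ∀ a b, ν (a * b) ≤ ‖a‖ * ν b) (hν_star : ∀ a, ν (star a) = ν a)
    (f : A) (hfin : (spectrum ℝ (selfAdjointPart ℝ f : A)).Finite) :
    ∃ p : A, IsStarProjection p ∧
      ν (f - p) ≤ 2 * ν (f * f - f) + (‖f‖ + 1 / 2) * ν (star f - f) := by
  set s : A := ↑(selfAdjointPart ℝ f)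
  set k : A := ↑(skewAdjointPart ℝ f)
  obtain ⟨p, c, hp, hc, hsp⟩ :=
    exists_isStarProjection_sub_eq_mul (selfAdjointPart ℝ f).property hfin
  have hs : ν (s * s - s) ≤ ν (f * f - f) + ‖f‖ * (ν (star f - f) / 2) :=
    seminorm_selfAdjointPart_mul_self_sub_le ν hν_mul hν_star f
  have hfp : f - p = c * (s * s - s) + k := by
    rw [← hsp, sub_add_eq_add_sub, StarModule.selfAdjointPart_add_skewAdjointPart]
  refine ⟨p, hp, ?_⟩
  calc
    ν (f - p) ≤ ν (c * (s * s - s)) + ν k := hfp ▸ map_add_le_add ν _ _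
    _ ≤ ‖c‖ * ν (s * s - s) + ν (star f - f) / 2 :=
      add_le_add (hν_mul _ _) (seminorm_skewAdjointPart ν f).le
    _ ≤ 2 * (ν (f * f - f) + ‖f‖ * (ν (star f - f) / 2)) + ν (star f - f) / 2 := by gcongr
    _ = 2 * ν (f * f - f) + (‖f‖ + 1 / 2) * ν (star f - f) := by ring

end AlmostProjection

section Frobenius

open scoped Matrix.Norms.Frobenius

variable {𝕜 m n : Type*} [RCLike 𝕜] [Fintype m] [Fintype n]

theorem frobenius_norm_sq_eq_sum_norm_col_sq {E : Type*} [SeminormedAddCommGroup E]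
    (a : Matrix m n E) :
    ‖a‖ ^ 2 = ∑ j, ‖WithLp.toLp 2 (a.col j)‖ ^ 2 := by
  rw [Matrix.frobenius_norm_def, ← Real.sqrt_eq_rpow, Real.sq_sqrt (by positivity),
    Finset.sum_comm]
  simp only [PiLp.norm_sq_eq_of_L2, Matrix.col_apply, Real.rpow_ofNat]

theorem re_trace_conjTranspose_mul_self (a : Matrix m n 𝕜) :
    RCLike.re (aᴴ * a).trace = ‖a‖ ^ 2 := by
  simp only [frobenius_norm_sq_eq_sum_norm_col_sq, EuclideanSpace.norm_sq_eq, Matrix.col_apply,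
    Matrix.trace, Matrix.diag_apply, Matrix.mul_apply, Matrix.conjTranspose_apply, RCLike.star_def,
    RCLike.conj_mul, ← RCLike.ofReal_pow, map_sum, RCLike.ofReal_re]

theorem frobenius_norm_mul_le_opNorm_mul [DecidableEq m] (a : Matrix m m 𝕜) (b : Matrix m n 𝕜) :
    ‖a * b‖ ≤ ‖Matrix.toEuclideanCLM (𝕜 := 𝕜) a‖ * ‖b‖ := by
  refine le_of_sq_le_sq ?_ (by positivity)
  rw [mul_pow]
  simp only [frobenius_norm_sq_eq_sum_norm_col_sq, Finset.mul_sum, ← mul_pow]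
  gcongr with j
  exact (Matrix.toEuclideanCLM (𝕜 := 𝕜) a).le_opNorm (WithLp.toLp 2 (b.col j))

end Frobenius

section L2Norm

variable {N : ℕ}

section

open scoped Matrix.Norms.Frobenius

theorem l2Norm_eq_frobenius_norm_div_sqrt (a : Matrix (Fin N) (Fin N) ℂ) :
    l2Norm a = ‖a‖ / √N := by
  rw [l2Norm, ← RCLike.re_eq_complex_re, re_trace_conjTranspose_mul_self,
    Real.sqrt_div (sq_nonneg _), Real.sqrt_sq (norm_nonneg a)]

theorem l2Norm_add_le (a b : Matrix (Fin N) (Fin N) ℂ) :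
    l2Norm (a + b) ≤ l2Norm a + l2Norm b := by
  simp only [l2Norm_eq_frobenius_norm_div_sqrt, ← add_div]
  gcongr
  exact norm_add_le a b

theorem l2Norm_smul {R : Type*} [NormedField R] [NormedSpace R ℂ] (r : R)
    (a : Matrix (Fin N) (Fin N) ℂ) :
    l2Norm (r • a) = ‖r‖ * l2Norm a := by
  simp only [l2Norm_eq_frobenius_norm_div_sqrt, norm_smul, mul_div_assoc]

theorem l2Norm_conjTranspose (a : Matrix (Fin N) (Fin N) ℂ) : l2Norm aᴴ = l2Norm a := by
  simp only [l2Norm_eq_frobenius_norm_div_sqrt, Matrix.frobenius_norm_conjTranspose]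

theorem l2Norm_mul_le (a b : Matrix (Fin N) (Fin N) ℂ) :
    l2Norm (a * b) ≤ opNorm a * l2Norm b := by
  simp only [l2Norm_eq_frobenius_norm_div_sqrt, ← mul_div_assoc]
  gcongr
  exact frobenius_norm_mul_le_opNorm_mul a b

end

/-- The normalized 2-norm as a real seminorm on `M_N(ℂ)`, a form in which it does not compete with
the operator norm for the `Norm` instance. -/
noncomputable def l2Seminorm (N : ℕ) : Seminorm ℝ (Matrix (Fin N) (Fin N) ℂ) :=
  .of l2Norm l2Norm_add_le l2Norm_smul

theorem exists_isStarProjection_l2Norm_sub_le (f : Matrix (Fin N) (Fin N) ℂ) :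
    ∃ p : Matrix (Fin N) (Fin N) ℂ, IsStarProjection p ∧
      l2Norm (f - p) ≤ 2 * l2Norm (f * f - f) + (opNorm f + 1 / 2) * l2Norm (fᴴ - f) := by
  open scoped Matrix.Norms.L2Operator in
  exact near_projection_general (l2Seminorm N) l2Norm_mul_le l2Norm_conjTranspose f
    Matrix.finite_real_spectrum

end L2Norm

/-- An element which is almost a projection is 2-norm close to an actual projection
(Jones, Lemma 3.2.7, in a matrix algebra). -/
theorem near_projection
    (N : ℕ) (hN : 0 < N) (f : Matrix (Fin N) (Fin N) ℂ) (δ : ℝ)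
    (hδ0 : 0 < δ) (hδ : δ ≤ 1 / 4)
    (hf : opNorm f ≤ 1)
    (h1 : l2Norm (f * f - f) < δ)
    (h2 : l2Norm (fᴴ - f) < δ) :
    ∃ p : Matrix (Fin N) (Fin N) ℂ,
      pᴴ = p ∧ p * p = p ∧ l2Norm (f - p) < 6 * δ ^ ((1 : ℝ) / 4) := by
  obtain ⟨p, hp, hfp⟩ := exists_isStarProjection_l2Norm_sub_le f
  refine ⟨p, hp.isSelfAdjoint, hp.isIdempotentElem, ?_⟩
  have hroot : δ ≤ δ ^ ((1 : ℝ) / 4) :=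
    Real.self_le_rpow_of_le_one hδ0.le (by linarith) (by norm_num)
  calc
    l2Norm (f - p) ≤ 2 * l2Norm (f * f - f) + (opNorm f + 1 / 2) * l2Norm (fᴴ - f) := hfp
    _ ≤ 2 * δ + (1 + 1 / 2) * δ := by gcongr; exact Real.sqrt_nonneg _
    _ < 6 * δ ^ ((1 : ℝ) / 4) := by linarith
end

section
/- Let N be a positive integer, u ∈ M_N(ℂ), and δ > 0 such that ‖u*u − 1‖₂ < δ. Then there exists a unitary v ∈ M_N(ℂ) (v*v = 1) such that ‖u − v‖₂ < (3 + ‖u‖)·δ. -/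
open scoped Matrix

/-! In the polar decomposition `u = v |u|` one has `(u - v)* (u - v) = (|u| - 1)²`, whereas
`(u* u - 1)² = (|u| - 1) (|u| + 1)² (|u| - 1)`. Since `(|u| + 1)² ≥ 1`, the former is at most the
latter in the Loewner order, so that `‖u - v‖₂ ≤ ‖u* u - 1‖₂`. -/

open Module
open scoped ComplexOrder MatrixOrder

theorem sub_one_sq_le_sq_sub_one_sq {A : Type*} [Ring A] [PartialOrder A] [StarRing A]
    [StarOrderedRing A] {p : A} (hp : 0 ≤ p) : (p - 1) ^ 2 ≤ (p ^ 2 - 1) ^ 2 := by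
  have hsa : IsSelfAdjoint p := .of_nonneg hp
  have hfactor : (p ^ 2 - 1) ^ 2 - (p - 1) ^ 2 = (p - 1) * (p ^ 2 + (p + p)) * (p - 1) := by
    noncomm_ring
  rw [← sub_nonneg, hfactor]
  exact (hsa.sub (.one A)).conjugate_nonneg (add_nonneg hsa.sq_nonneg (add_nonneg hp hp))

section LinearIsometry

theorem exists_linearIsometry_range_of_norm_eq {𝕜 E F G : Type*} [DivisionRing 𝕜]
    [AddCommGroup E] [Module 𝕜 E] [NormedAddCommGroup F] [Module 𝕜 F]
    [SeminormedAddCommGroup G] [Module 𝕜 G] {f : E →ₗ[𝕜] F} {g : E →ₗ[𝕜] G}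
    (h : ∀ x, ‖f x‖ = ‖g x‖) :
    ∃ L : LinearMap.range g →ₗᵢ[𝕜] F, ∀ x, L (g.rangeRestrict x) = f x := by
  obtain ⟨s, hs⟩ := g.rangeRestrict.exists_rightInverse_of_surjective g.range_rangeRestrict
  have hgs (y : LinearMap.range g) : g (s y) = y := congr((($hs y : LinearMap.range g) : G))
  refine ⟨⟨f ∘ₗ s, fun y ↦ ?_⟩, fun x ↦ ?_⟩
  · rw [LinearMap.comp_apply, h, hgs, Submodule.coe_norm]
  · change f (s (g.rangeRestrict x)) = f x
    rw [← sub_eq_zero, ← norm_eq_zero, ← map_sub, h, map_sub, hgs]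
    simp

variable {𝕜 F G : Type*} [RCLike 𝕜]
  [NormedAddCommGroup F] [InnerProductSpace 𝕜 F] [FiniteDimensional 𝕜 F]
  [NormedAddCommGroup G] [InnerProductSpace 𝕜 G] [FiniteDimensional 𝕜 G]

theorem nonempty_linearIsometry_of_finrank_le (h : finrank 𝕜 G ≤ finrank 𝕜 F) :
    Nonempty (G →ₗᵢ[𝕜] F) := by
  let b := stdOrthonormalBasis 𝕜 G
  let w := stdOrthonormalBasis 𝕜 F ∘ Fin.castLE h
  have hb : Orthonormal 𝕜 b.toBasis := by simp
  have hw : Orthonormal 𝕜 w :=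
    (stdOrthonormalBasis 𝕜 F).orthonormal.comp _ (Fin.castLE_injective h)
  have hbw : b.toBasis.constr 𝕜 w ∘ b.toBasis = w := funext (b.toBasis.constr_basis 𝕜 w)
  exact ⟨(b.toBasis.constr 𝕜 w).isometryOfOrthonormal hb (by rwa [hbw])⟩

theorem exists_linearIsometry_comp_eq_of_norm_eq {E : Type*} [AddCommGroup E] [Module 𝕜 E]
    (hGF : finrank 𝕜 G ≤ finrank 𝕜 F) {f : E →ₗ[𝕜] F} {g : E →ₗ[𝕜] G}
    (h : ∀ x, ‖f x‖ = ‖g x‖) : ∃ L : G →ₗᵢ[𝕜] F, L.toLinearMap ∘ₗ g = f := by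
  obtain ⟨ι⟩ := nonempty_linearIsometry_of_finrank_le hGF
  let ιg : E →ₗ[𝕜] F := ι.toLinearMap ∘ₗ g
  obtain ⟨L, hL⟩ := exists_linearIsometry_range_of_norm_eq (f := f) (g := ιg) (by simp [ιg, h])
  refine ⟨L.extend.comp ι, LinearMap.ext fun x ↦ ?_⟩
  calc L.extend (ιg x) = L (ιg.rangeRestrict x) := L.extend_apply (ιg.rangeRestrict x)
    _ = f x := hL x

end LinearIsometry

section Matrix

open Matrix

variable {𝕜 m n k : Type*} [RCLike 𝕜] [Fintype m] [Fintype k]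

section Gram

variable [Fintype n] [DecidableEq n]

theorem inner_toEuclideanLin_toEuclideanLin (a : Matrix m n 𝕜) (x y : EuclideanSpace 𝕜 n) :
    inner 𝕜 (a.toEuclideanLin x) (a.toEuclideanLin y) =
      inner 𝕜 ((aᴴ * a).toEuclideanLin x) y := by
  classical
  rw [toLpLin_mul_same, toEuclideanLin_conjTranspose_eq_adjoint, LinearMap.comp_apply,
    LinearMap.adjoint_inner_left]

theorem conjTranspose_mul_self_eq_iff_norm_eq {a : Matrix m n 𝕜} {b : Matrix k n 𝕜} :
    aᴴ * a = bᴴ * b ↔ ∀ x, ‖a.toEuclideanLin x‖ = ‖b.toEuclideanLin x‖ := by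
  refine ⟨fun h x ↦ ?_, fun h ↦ ?_⟩
  · simp_rw [@norm_eq_sqrt_re_inner 𝕜, inner_toEuclideanLin_toEuclideanLin, h]
  · refine toEuclideanLin.injective (LinearMap.ext fun x ↦ ext_inner_right 𝕜 fun y ↦ ?_)
    simp_rw [← inner_toEuclideanLin_toEuclideanLin, inner_eq_sum_norm_sq_div_four, ← map_smul,
      ← map_add, ← map_sub, h]

theorem conjTranspose_mul_self_eq_one_iff_norm_eq {a : Matrix m n 𝕜} :
    aᴴ * a = 1 ↔ ∀ x, ‖a.toEuclideanLin x‖ = ‖x‖ := by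
  simpa using conjTranspose_mul_self_eq_iff_norm_eq (a := a) (b := (1 : Matrix n n 𝕜))

end Gram

theorem exists_mul_eq_of_conjTranspose_mul_self_eq [Finite n] [DecidableEq k]
    (hcard : Fintype.card k ≤ Fintype.card m) {a : Matrix m n 𝕜} {b : Matrix k n 𝕜}
    (h : aᴴ * a = bᴴ * b) : ∃ v : Matrix m k 𝕜, vᴴ * v = 1 ∧ v * b = a := by
  classical
  have := Fintype.ofFinite n
  obtain ⟨L, hL⟩ := exists_linearIsometry_comp_eq_of_norm_eq (by simpa using hcard)
    (conjTranspose_mul_self_eq_iff_norm_eq.mp h)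
  refine ⟨toEuclideanLin.symm L.toLinearMap, ?_, toEuclideanLin.injective ?_⟩
  · simp [conjTranspose_mul_self_eq_one_iff_norm_eq]
  · rw [toLpLin_mul_same, LinearEquiv.apply_symm_apply, hL]

variable [Fintype n] [DecidableEq n]

theorem exists_polar_decomposition (hcard : Fintype.card n ≤ Fintype.card m)
    (u : Matrix m n 𝕜) :
    ∃ (v : Matrix m n 𝕜) (p : Matrix n n 𝕜), vᴴ * v = 1 ∧ 0 ≤ p ∧ v * p = u := by
  let p := CFC.sqrt (uᴴ * u)
  have hp : 0 ≤ p := CFC.sqrt_nonneg _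
  have hpp : uᴴ * u = pᴴ * p := by
    rw [← star_eq_conjTranspose p, (IsSelfAdjoint.of_nonneg hp).star_eq,
      CFC.sqrt_mul_sqrt_self _ (posSemidef_conjTranspose_mul_self u).nonneg]
  obtain ⟨v, hv, hvp⟩ := exists_mul_eq_of_conjTranspose_mul_self_eq hcard hpp
  exact ⟨v, p, hv, hp, hvp⟩

theorem near_unitary_general (hcard : Fintype.card n ≤ Fintype.card m) (u : Matrix m n 𝕜) :
    ∃ v : Matrix m n 𝕜,
      vᴴ * v = 1 ∧ (u - v)ᴴ * (u - v) ≤ (uᴴ * u - 1)ᴴ * (uᴴ * u - 1) := by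
  obtain ⟨v, p, hv, hp, rfl⟩ := exists_polar_decomposition hcard u
  have hpH : pᴴ = p := (IsSelfAdjoint.of_nonneg hp).star_eq
  have hgram (a : Matrix n n 𝕜) : (v * a)ᴴ * (v * a) = aᴴ * a := by
    rw [conjTranspose_mul, Matrix.mul_assoc, ← Matrix.mul_assoc vᴴ, hv, Matrix.one_mul]
  have hdist : v * p - v = v * (p - 1) := by rw [Matrix.mul_sub, Matrix.mul_one]
  refine ⟨v, hv, ?_⟩
  rw [hdist, hgram, hgram]
  simpa [hpH, sq] using sub_one_sq_le_sq_sub_one_sq hp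

end Matrix

theorem l2Norm_le_l2Norm {N : ℕ} {a b : Matrix (Fin N) (Fin N) ℂ} (h : aᴴ * a ≤ bᴴ * b) :
    l2Norm a ≤ l2Norm b := by
  have htrace : (aᴴ * a).trace.re ≤ (bᴴ * b).trace.re :=
    Complex.re_le_re ((Matrix.tracePositiveLinearMap (Fin N) ℂ ℂ).monotone' h)
  unfold l2Norm
  gcongr

/-- An element which is almost a unitary is 2-norm close to an actual unitary
(Jones, Lemma 3.2.1, in a matrix algebra). -/
theorem near_unitary
    (N : ℕ) (hN : 0 < N) (u : Matrix (Fin N) (Fin N) ℂ) (δ : ℝ)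
    (hδ0 : 0 < δ)
    (h : l2Norm (uᴴ * u - 1) < δ) :
    ∃ v : Matrix (Fin N) (Fin N) ℂ,
      vᴴ * v = 1 ∧ l2Norm (u - v) < (3 + opNorm u) * δ := by
  obtain ⟨v, hv, huv⟩ := near_unitary_general le_rfl u
  have hu : 1 ≤ 3 + opNorm u := by linarith [show 0 ≤ opNorm u from norm_nonneg _]
  exact ⟨v, hv, (l2Norm_le_l2Norm huv).trans_lt (h.trans_le (le_mul_of_one_le_left hδ0.le hu))⟩
end

section
/- Let π, ρ, σ be unitary matrix representations of a finite group G, of dimensions dπ, dρ, dσ. For every intertwiner T from σ to π⊗ρ, the matrix T̃ with entries T̃_{(i,m),k} = sqrt(dρ/dσ)·conj(T_{(i,k),m}) is an intertwiner from ρ to π̄⊗σ. Moreover, the map T ↦ T̃ is a bijection from the set of intertwiners from σ to π⊗ρ onto the set of intertwiners from ρ to π̄⊗σ. -/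
open scoped Matrix Kronecker

/-- The Frobenius reciprocity map `(σ, π⊗ρ) → (ρ, π̄⊗σ)`,
`T̃_{(i,m),k} = sqrt(dρ/dσ) · conj(T_{(i,k),m})`. -/
noncomputable def frobMap (dπ dρ dσ : ℕ) (T : Matrix (Fin dπ × Fin dρ) (Fin dσ) ℂ) :
    Matrix (Fin dπ × Fin dσ) (Fin dρ) ℂ :=
  Matrix.of fun (p : Fin dπ × Fin dσ) (k : Fin dρ) =>
    (Real.sqrt ((dρ : ℝ) / (dσ : ℝ)) : ℂ) * star (T (p.1, k) p.2)

/-!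
View `T : σ → π ⊗ ρ` as a column of blocks `Tᵢ`, one for each basis vector of `π`; up to a scalar,
`T̃` is the column of the blocks `Tᵢᴴ`. Blockwise conjugate transposition turns `(A ⊗ B) T C` into
`(Ā ⊗ Cᴴ) T̃ Bᴴ`. For unitary `C` the intertwining relation `(A ⊗ B) T = T C` says that `T` is
fixed by `T ↦ (A ⊗ B) T Cᴴ`, which therefore becomes `(Ā ⊗ C) T̃ Bᴴ = T̃`, i.e.
`(Ā ⊗ C) T̃ = T̃ B` for unitary `B`.
-/

section BlockConjTranspose

open Matrix

variable {l l' m m' n n' R : Type*}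

/-- Blockwise conjugate transpose: a matrix with rows indexed by `l × m` is regarded as a column of
`m × n` blocks indexed by `l`, and each block is replaced by its conjugate transpose. This is the
Frobenius reciprocity map without its normalizing scalar. -/
def blockConjTranspose [InvolutiveStar R] : Matrix (l × m) n R ≃ Matrix (l × n) m R where
  toFun T := of fun p k => star (T (p.1, k) p.2)
  invFun S := of fun p k => star (S (p.1, k) p.2)
  left_inv T := by ext; simp
  right_inv S := by ext; simp

@[simp]
theorem blockConjTranspose_apply [InvolutiveStar R] (T : Matrix (l × m) n R) (i : l) (j : n)
    (k : m) : blockConjTranspose T (i, j) k = star (T (i, k) j) :=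
  rfl

theorem blockConjTranspose_kronecker_mul_mul [Fintype l] [Fintype m] [Fintype n] [CommSemiring R]
    [StarRing R] (A : Matrix l' l R) (B : Matrix m' m R) (T : Matrix (l × m) n R)
    (C : Matrix n n' R) :
    blockConjTranspose ((A ⊗ₖ B) * T * C) =
      (A.map star ⊗ₖ Cᴴ) * blockConjTranspose T * Bᴴ := by
  ext ⟨i, j⟩ k
  simp only [blockConjTranspose_apply, mul_apply, kronecker_apply, map_apply,
    conjTranspose_apply, Fintype.sum_prod_type_right, Finset.sum_mul, star_sum, star_mul']
  rw [Finset.sum_comm]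
  refine Finset.sum_congr rfl fun k' _ => Finset.sum_congr rfl fun j' _ =>
    Finset.sum_congr rfl fun i' _ => ?_
  ring

theorem eq_mul_iff_mul_conjTranspose_eq [Fintype n] [DecidableEq n] [CommRing R] [StarRing R]
    {U : Matrix n n R} (hU : U ∈ unitaryGroup n R) {X Y : Matrix m n R} :
    X = Y * U ↔ X * Uᴴ = Y := by
  constructor
  · rintro rfl
    rw [Matrix.mul_assoc, ← star_eq_conjTranspose, mem_unitaryGroup_iff.1 hU, Matrix.mul_one]
  · rintro rfl
    rw [Matrix.mul_assoc, ← star_eq_conjTranspose, mem_unitaryGroup_iff'.1 hU, Matrix.mul_one]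

variable [Fintype l] [Fintype m] [Fintype n] [DecidableEq m] [DecidableEq n] [CommRing R]
  [StarRing R]

theorem kronecker_map_star_mul_blockConjTranspose_eq_iff (A : Matrix l l R) {B : Matrix m m R}
    {C : Matrix n n R} (hB : B ∈ unitaryGroup m R) (hC : C ∈ unitaryGroup n R)
    (T : Matrix (l × m) n R) :
    (A.map star ⊗ₖ C) * blockConjTranspose T = blockConjTranspose T * B ↔
      (A ⊗ₖ B) * T = T * C := by
  have naturality := blockConjTranspose_kronecker_mul_mul A B T Cᴴ
  rw [conjTranspose_conjTranspose] at naturality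
  rw [eq_mul_iff_mul_conjTranspose_eq hB, ← naturality, blockConjTranspose.apply_eq_iff_eq,
    eq_mul_iff_mul_conjTranspose_eq hC]

theorem bijOn_smul_blockConjTranspose {ι : Type*} (c : Rˣ) (A : ι → Matrix l l R)
    {B : ι → Matrix m m R} {C : ι → Matrix n n R} (hB : ∀ x, B x ∈ unitaryGroup m R)
    (hC : ∀ x, C x ∈ unitaryGroup n R) :
    Set.BijOn (fun T => c • blockConjTranspose T)
      {T : Matrix (l × m) n R | ∀ x, (A x ⊗ₖ B x) * T = T * C x}
      {S : Matrix (l × n) m R | ∀ x, ((A x).map star ⊗ₖ C x) * S = S * B x} := by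
  refine (blockConjTranspose.trans (MulAction.toPerm c)).bijOn fun T => forall_congr' fun x => ?_
  change _ * (c • blockConjTranspose T) = (c • blockConjTranspose T) * _ ↔ _
  rw [Matrix.mul_smul, Matrix.smul_mul, smul_left_cancel_iff,
    kronecker_map_star_mul_blockConjTranspose_eq_iff (A x) (hB x) (hC x)]

end BlockConjTranspose

-- If `dρ = 0` or `dσ = 0`, then `√(dρ / dσ)` is `0`, but the matrices are empty and
-- `c = 1` works.
theorem exists_units_frobMap_eq_smul_blockConjTranspose (dπ dρ dσ : ℕ) :
    ∃ c : ℂˣ, frobMap dπ dρ dσ = fun T => c • blockConjTranspose T := by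
  rcases dρ.eq_zero_or_pos with rfl | hρ
  · exact ⟨1, Subsingleton.elim _ _⟩
  rcases dσ.eq_zero_or_pos with rfl | hσ
  · exact ⟨1, Subsingleton.elim _ _⟩
  have scalar_ne_zero : (Real.sqrt ((dρ : ℝ) / (dσ : ℝ)) : ℂ) ≠ 0 :=
    Complex.ofReal_ne_zero.2 (by positivity)
  exact ⟨Units.mk0 _ scalar_ne_zero, rfl⟩

theorem frobenius_reciprocity_bijOn_general {ι : Type*} {dπ dρ dσ : ℕ}
    (π : ι → Matrix (Fin dπ) (Fin dπ) ℂ) {ρ : ι → Matrix (Fin dρ) (Fin dρ) ℂ}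
    {σ : ι → Matrix (Fin dσ) (Fin dσ) ℂ} (hρ : ∀ x, ρ x ∈ Matrix.unitaryGroup (Fin dρ) ℂ)
    (hσ : ∀ x, σ x ∈ Matrix.unitaryGroup (Fin dσ) ℂ) :
    Set.BijOn (frobMap dπ dρ dσ)
      {T : Matrix (Fin dπ × Fin dρ) (Fin dσ) ℂ | ∀ x, (π x ⊗ₖ ρ x) * T = T * σ x}
      {S : Matrix (Fin dπ × Fin dσ) (Fin dρ) ℂ |
        ∀ x, ((π x).map star ⊗ₖ σ x) * S = S * ρ x} := by
  obtain ⟨c, hc⟩ := exists_units_frobMap_eq_smul_blockConjTranspose dπ dρ dσ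
  rw [hc]
  exact bijOn_smul_blockConjTranspose c π hρ hσ

/-- Frobenius reciprocity: `T ↦ T̃` is a bijection from the intertwiners `(σ, π⊗ρ)`
onto the intertwiners `(ρ, π̄⊗σ)`. -/
theorem frobenius_reciprocity_bijOn
    {G : Type*} [Group G] [Fintype G]
    (dπ dρ dσ : ℕ)
    (π : G → Matrix (Fin dπ) (Fin dπ) ℂ)
    (ρ : G → Matrix (Fin dρ) (Fin dρ) ℂ)
    (σ : G → Matrix (Fin dσ) (Fin dσ) ℂ)
    (hπmul : ∀ g h, π (g * h) = π g * π h) (hπone : π 1 = 1)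
    (hπu : ∀ g, (π g)ᴴ * π g = 1)
    (hρmul : ∀ g h, ρ (g * h) = ρ g * ρ h) (hρone : ρ 1 = 1)
    (hρu : ∀ g, (ρ g)ᴴ * ρ g = 1)
    (hσmul : ∀ g h, σ (g * h) = σ g * σ h) (hσone : σ 1 = 1)
    (hσu : ∀ g, (σ g)ᴴ * σ g = 1) :
    Set.BijOn (frobMap dπ dρ dσ)
      {T : Matrix (Fin dπ × Fin dρ) (Fin dσ) ℂ | ∀ g, (π g ⊗ₖ ρ g) * T = T * σ g}
      {S : Matrix (Fin dπ × Fin dσ) (Fin dρ) ℂ |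
        ∀ g, ((π g).map star ⊗ₖ σ g) * S = S * ρ g} :=
  frobenius_reciprocity_bijOn_general π (fun g => Matrix.mem_unitaryGroup_iff'.2 (hρu g))
    fun g => Matrix.mem_unitaryGroup_iff'.2 (hσu g)
end
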